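/- Let p be a prime, N ≥ 1, let 𝔩(ξ) ∈ ℤ_p[ξ_1,…,ξ_N] be an elliptic polynomial of degree d, and let α > 0 and m > 0 be real numbers. Then there exist positive constants C_0' and C_1' such that C_0'·[ξ]_p^{⌊dα⌋} ≤ (|𝔩(ξ)|_p + m²)^{α} ≤ C_1'·[ξ]_p^{⌈dα⌉} for all ξ ∈ ℚ_p^N, where ⌊t⌋ and ⌈t⌉ denote the floor and ceiling of t and [ξ]_p := max(1, ‖ξ‖_p). -/

import Mathlib

open MvPolynomial

/-!
A homogeneous function of degree `d` is determined by its values on the unit sphere, because the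
sup norm of a nonzero vector is the norm of one of its coordinates and dividing by that coordinate
normalises the vector. Over a locally compact field the sphere is compact, so a continuous
homogeneous function that is positive away from the origin is comparable to `‖ξ‖ ^ d`. Adding a
positive constant makes it comparable to `max 1 ‖ξ‖ ^ d`. Raising to the power `α` gives the
exponent `d * α`, which may be rounded since `1 ≤ max 1 ‖ξ‖`.
-/

section Normalization

variable {ι K : Type*} [Fintype ι] [Nonempty ι]

lemma exists_norm_apply_eq_pi_norm {E : ι → Type*} [∀ i, SeminormedAddGroup (E i)]
    (x : ∀ i, E i) : ∃ i, ‖x i‖ = ‖x‖ := by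
  obtain ⟨i, hi⟩ := Finite.exists_max fun i => ‖x i‖
  exact ⟨i, (norm_le_pi_norm x i).antisymm ((pi_norm_le_iff_of_nonneg (norm_nonneg _)).2 hi)⟩

lemma exists_smul_eq_and_norm_eq_one [NormedField K] (x : ι → K) :
    ∃ (a : K) (u : ι → K), ‖u‖ = 1 ∧ a • u = x := by
  rcases eq_or_ne x 0 with rfl | hx
  · exact ⟨0, 1, norm_one, zero_smul K 1⟩
  obtain ⟨i, hi⟩ := exists_norm_apply_eq_pi_norm x
  have norm_ne : ‖x‖ ≠ 0 := norm_ne_zero_iff.2 hx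
  have apply_ne : x i ≠ 0 := norm_ne_zero_iff.1 (hi ▸ norm_ne)
  refine ⟨x i, (x i)⁻¹ • x, ?_, smul_inv_smul₀ apply_ne x⟩
  rw [norm_smul, norm_inv, hi, inv_mul_cancel₀ norm_ne]

lemma exists_pow_norm_bounds_of_homogeneous [NormedField K] [ProperSpace K]
    {f : (ι → K) → ℝ} {d : ℕ} (hcont : Continuous f)
    (hhom : ∀ (a : K) (x : ι → K), f (a • x) = ‖a‖ ^ d * f x) (hpos : ∀ x ≠ 0, 0 < f x) :
    ∃ c C : ℝ, 0 < c ∧ 0 < C ∧ ∀ x, c * ‖x‖ ^ d ≤ f x ∧ f x ≤ C * ‖x‖ ^ d := by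
  have sphere_nonempty : (Metric.sphere (0 : ι → K) 1).Nonempty := ⟨1, by simp⟩
  have sphere_compact : IsCompact (Metric.sphere (0 : ι → K) 1) := isCompact_sphere 0 1
  obtain ⟨v, hv, hmin⟩ := sphere_compact.exists_isMinOn sphere_nonempty hcont.continuousOn
  obtain ⟨w, hw, hmax⟩ := sphere_compact.exists_isMaxOn sphere_nonempty hcont.continuousOn
  refine ⟨f v, f w, hpos v (ne_zero_of_mem_unit_sphere ⟨v, hv⟩),
    hpos w (ne_zero_of_mem_unit_sphere ⟨w, hw⟩), fun x => ?_⟩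
  obtain ⟨a, u, hu, rfl⟩ := exists_smul_eq_and_norm_eq_one x
  have u_mem : u ∈ Metric.sphere (0 : ι → K) 1 := mem_sphere_zero_iff_norm.2 hu
  rw [hhom, norm_smul, hu, mul_one, mul_comm (f v), mul_comm (f w)]
  exact ⟨mul_le_mul_of_nonneg_left (hmin u_mem) (by positivity),
    mul_le_mul_of_nonneg_left (hmax u_mem) (by positivity)⟩

end Normalization

section HomogeneousPolynomial

lemma eval_smul_of_isHomogeneous {σ R : Type*} [CommSemiring R] {P : MvPolynomial σ R} {d : ℕ}
    (hP : P.IsHomogeneous d) (a : R) (x : σ → R) : eval (a • x) P = a ^ d * eval x P := by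
  rw [eval_eq, eval_eq, Finset.mul_sum]
  refine Finset.sum_congr rfl fun s hs => ?_
  simp only [Pi.smul_apply, smul_eq_mul, mul_pow, Finset.prod_mul_distrib,
    Finset.prod_pow_eq_pow_sum, ← hP.degree_eq_sum_deg_support hs]
  exact mul_left_comm _ _ _

variable {ι K : Type*} [Fintype ι] [Nonempty ι] [NormedField K] [ProperSpace K]
  {P : MvPolynomial ι K} {d : ℕ}

lemma exists_pow_norm_bounds_norm_eval (hhom : P.IsHomogeneous d)
    (hell : ∀ ξ, eval ξ P = 0 → ξ = 0) :
    ∃ c C : ℝ, 0 < c ∧ 0 < C ∧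
      ∀ ξ, c * ‖ξ‖ ^ d ≤ ‖eval ξ P‖ ∧ ‖eval ξ P‖ ≤ C * ‖ξ‖ ^ d :=
  exists_pow_norm_bounds_of_homogeneous (continuous_eval P).norm
    (fun a ξ => by rw [eval_smul_of_isHomogeneous hhom, norm_mul, norm_pow])
    (fun ξ hξ => norm_pos_iff.2 (mt (hell ξ) hξ))

end HomogeneousPolynomial

section RealInequalities

variable {c r y μ : ℝ} {d : ℕ}

lemma min_mul_max_one_pow_le_add (hy : 0 ≤ y) (hμ : 0 ≤ μ) (h : c * r ^ d ≤ y) :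
    min c μ * max 1 r ^ d ≤ y + μ := by
  rcases le_total r 1 with r_le | le_r
  · rw [max_eq_left r_le, one_pow, mul_one]
    exact (min_le_right c μ).trans (le_add_of_nonneg_left hy)
  · rw [max_eq_right le_r]
    calc min c μ * r ^ d ≤ c * r ^ d := by gcongr; exact min_le_left c μ
      _ ≤ y := h
      _ ≤ y + μ := le_add_of_nonneg_right hμ

lemma add_le_add_mul_max_one_pow (hc : 0 ≤ c) (hμ : 0 ≤ μ) (hr : 0 ≤ r) (h : y ≤ c * r ^ d) :
    y + μ ≤ (c + μ) * max 1 r ^ d := by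
  have one_le_pow : 1 ≤ max 1 r ^ d := one_le_pow₀ (le_max_left 1 r)
  calc y + μ ≤ c * r ^ d + μ * 1 := by linarith
    _ ≤ c * max 1 r ^ d + μ * max 1 r ^ d := by gcongr; exact le_max_right 1 r
    _ = (c + μ) * max 1 r ^ d := (add_mul _ _ _).symm

lemma mul_pow_rpow (hc : 0 ≤ c) (hr : 0 ≤ r) (α : ℝ) :
    (c * r ^ d) ^ α = c ^ α * r ^ (d * α) := by
  rw [Real.mul_rpow hc (by positivity), Real.rpow_natCast_mul hr]

end RealInequalities

section EllipticSymbol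

variable {ι K : Type*} [Fintype ι] [Nonempty ι] [NormedField K] [ProperSpace K]
  {P : MvPolynomial ι K} {d : ℕ} {α μ : ℝ}

lemma exists_max_one_rpow_bounds_norm_eval_add_rpow (hhom : P.IsHomogeneous d)
    (hell : ∀ ξ, eval ξ P = 0 → ξ = 0) (hα : 0 ≤ α) (hμ : 0 < μ) :
    ∃ C₀ C₁ : ℝ, 0 < C₀ ∧ 0 < C₁ ∧ ∀ ξ,
      C₀ * max 1 ‖ξ‖ ^ (d * α) ≤ (‖eval ξ P‖ + μ) ^ α ∧
        (‖eval ξ P‖ + μ) ^ α ≤ C₁ * max 1 ‖ξ‖ ^ (d * α) := by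
  obtain ⟨c, C, hc, hC, bounds⟩ := exists_pow_norm_bounds_norm_eval hhom hell
  refine ⟨min c μ ^ α, (C + μ) ^ α, by positivity, by positivity, fun ξ => ?_⟩
  obtain ⟨lower, upper⟩ := bounds ξ
  rw [← mul_pow_rpow (by positivity) (by positivity),
    ← mul_pow_rpow (by positivity) (by positivity)]
  constructor
  · gcongr
    exact min_mul_max_one_pow_le_add (norm_nonneg _) hμ.le lower
  · gcongr
    exact add_le_add_mul_max_one_pow hC.le hμ.le (norm_nonneg _) upper

theorem elliptic_symbol_alt_floor_ceil_bounds_general (hhom : P.IsHomogeneous d)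
    (hell : ∀ ξ, eval ξ P = 0 → ξ = 0) (hα : 0 ≤ α) (hμ : 0 < μ) :
    ∃ C₀ C₁ : ℝ, 0 < C₀ ∧ 0 < C₁ ∧ ∀ ξ,
      C₀ * max 1 ‖ξ‖ ^ (⌊d * α⌋ : ℝ) ≤ (‖eval ξ P‖ + μ) ^ α ∧
        (‖eval ξ P‖ + μ) ^ α ≤ C₁ * max 1 ‖ξ‖ ^ (⌈d * α⌉ : ℝ) := by
  obtain ⟨C₀, C₁, hC₀, hC₁, bounds⟩ :=
    exists_max_one_rpow_bounds_norm_eval_add_rpow hhom hell hα hμ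
  refine ⟨C₀, C₁, hC₀, hC₁, fun ξ => ?_⟩
  have one_le : 1 ≤ max 1 ‖ξ‖ := le_max_left 1 ‖ξ‖
  constructor
  · refine le_trans ?_ (bounds ξ).1
    gcongr
    exact Int.floor_le _
  · refine (bounds ξ).2.trans ?_
    gcongr
    exact Int.le_ceil _

end EllipticSymbol

/-- For an elliptic polynomial `L` of degree `d` and reals `α > 0`, `m > 0`,
there exist positive constants `C₀', C₁'` such that
`C₀' [ξ]_p^{⌊dα⌋} ≤ (|L(ξ)|_p + m²)^α ≤ C₁' [ξ]_p^{⌈dα⌉}` for all `ξ ∈ ℚ_p^N`,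
where `[ξ]_p = max(1, ‖ξ‖_p)`. -/
theorem elliptic_symbol_alt_floor_ceil_bounds
    (p : ℕ) [Fact p.Prime] (N : ℕ) (hN : 1 ≤ N)
    (d : ℕ) (hd : 1 ≤ d) (L : MvPolynomial (Fin N) ℤ_[p])
    (hhom : L.IsHomogeneous d)
    (hell : ∀ ξ : Fin N → ℚ_[p], eval₂ PadicInt.Coe.ringHom ξ L = 0 ↔ ξ = 0)
    (α m : ℝ) (hα : 0 < α) (hm : 0 < m) :
    ∃ C₀' C₁' : ℝ, 0 < C₀' ∧ 0 < C₁' ∧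
      ∀ ξ : Fin N → ℚ_[p],
        C₀' * (max 1 ‖ξ‖) ^ ((⌊(d : ℝ) * α⌋ : ℝ)) ≤
            (‖eval₂ PadicInt.Coe.ringHom ξ L‖ + m ^ 2) ^ α ∧
        (‖eval₂ PadicInt.Coe.ringHom ξ L‖ + m ^ 2) ^ α ≤
            C₁' * (max 1 ‖ξ‖) ^ ((⌈(d : ℝ) * α⌉ : ℝ)) := by
  have : Nonempty (Fin N) := ⟨⟨0, hN⟩⟩
  simpa only [eval_map] using elliptic_symbol_alt_floor_ceil_bounds_general
    (hhom.map PadicInt.Coe.ringHom) (fun ξ hξ => (hell ξ).1 (eval_map _ ξ L ▸ hξ))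
    hα.le (pow_pos hm 2)
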